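/- There is an absolute constant C > 0 such that for every integer k ≥ 3 and every integer n ≥ k+1, the number of distinct values attained by the permanent on (k+1)×n ±1 matrices satisfies r_{k+1,n} ≥ k^(−C·k²) · n^(k−2). In particular one may take the explicit bound r_{k+1,n} ≥ (4·(16k⁵)^k)^{−(k−2)} · n^(k−2). -/

import Mathlib

/-- The permanent of a rectangular `k × n` real matrix. -/
noncomputable def rperm {k n : ℕ} (A : Matrix (Fin k) (Fin n) ℝ) : ℝ :=
  ∑ σ : Fin k ↪ Fin n, ∏ i, A i (σ i)

/-- `permCount k n = r_{k,n}`: the number of distinct values attained by the permanent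
on the set `Ω_{k,n}` of `k × n` matrices with `±1` entries. -/
noncomputable def permCount (k n : ℕ) : ℕ :=
  {x : ℝ | ∃ A : Matrix (Fin k) (Fin n) ℝ,
      (∀ i j, A i j = 1 ∨ A i j = -1) ∧ rperm A = x}.ncard


/-- permanent over general finite index types -/
noncomputable def gper {ι κ : Type} [Fintype ι] [DecidableEq ι] [Fintype κ] [DecidableEq κ]
    (B : ι → κ → ℝ) : ℝ := ∑ σ : ι ↪ κ, ∏ i, B i (σ i)

section
set_option linter.unusedSectionVars false
variable {ι ι' κ κ' : Type} [Fintype ι] [DecidableEq ι] [Fintype κ] [DecidableEq κ]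
  [Fintype ι'] [DecidableEq ι'] [Fintype κ'] [DecidableEq κ']

lemma gper_equiv (e : ι ≃ ι') (f : κ ≃ κ') (B : ι' → κ' → ℝ) :
    gper (fun i j => B (e i) (f j)) = gper B := by
  unfold gper
  refine Fintype.sum_equiv (Equiv.embeddingCongr e f) _ _ ?_
  intro σ
  refine Fintype.prod_equiv e _ _ ?_
  intro i
  simp

lemma gper_option (v : κ → ℝ) (B : ι → κ → ℝ) :
    gper (fun o : Option ι => o.elim v B) =
      ∑ f : ι ↪ κ, (∏ i, B i (f i)) * (∑ j, v j - ∑ i, v (f i)) := by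
  classical
  unfold gper
  rw [Fintype.sum_equiv (Function.Embedding.optionEmbeddingEquiv ι κ) _
    (fun x => v x.2 * ∏ i, B i (x.1 i)) ?_]
  · rw [Fintype.sum_sigma]
    refine Finset.sum_congr rfl fun f _ => ?_
    dsimp only
    rw [← Finset.sum_mul, mul_comm]
    congr 1
    rw [eq_sub_iff_add_eq]
    have h1 : ∑ i, v (f i) = ∑ x : (Set.range f), v x := by
      refine Fintype.sum_equiv (Equiv.ofInjective f f.injective) _ _ ?_
      intro i; simp
    rw [h1, add_comm]
    convert Fintype.sum_subtype_add_sum_subtype (fun x => x ∈ Set.range f) v using 2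
    · refine Finset.sum_congr ?_ fun _ _ => rfl
      congr 1
      exact Subsingleton.elim _ _
    · exact Fintype.sum_equiv (Equiv.refl _) _ _ (fun _ => rfl)
  · intro σ
    rw [Fintype.prod_option]
    simp [Function.Embedding.optionEmbeddingEquiv]

/-- rows in `U` -/
noncomputable def PU (A : ι → κ → ℝ) (U : Finset ι) : ℝ := gper (fun i : U => A i)

noncomputable def WU (A : ι → κ → ℝ) (U : Finset ι) (v : κ → ℝ) : ℝ :=
  gper (fun o : Option U => o.elim v (fun i => A i))

noncomputable def corr (A : ι → κ → ℝ) (v : κ → ℝ) (T : Finset ι) : ℝ :=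
  ∑ j, v j * ∏ i ∈ T, A i j

lemma WU_rec_aux (A : ι → κ → ℝ) (U : Finset ι) (v : κ → ℝ) (r : U) :
    ∑ f : U ↪ κ, (∏ i : U, A i (f i)) * v (f r) =
      WU A (U.erase r) (fun j => v j * A r j) := by
  unfold WU
  let e0 : {b : U // b ≠ r} ≃ (U.erase r : Finset ι) :=
    { toFun := fun b => ⟨b.1.1, by
        rw [Finset.mem_erase]
        exact ⟨fun h => b.2 (Subtype.ext h), b.1.2⟩⟩
      invFun := fun b => ⟨⟨b.1, Finset.mem_of_mem_erase b.2⟩, fun h => by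
        have := Finset.ne_of_mem_erase b.2
        exact this (congrArg Subtype.val h)⟩
      left_inv := fun b => rfl
      right_inv := fun b => rfl }
  let e : Option (U.erase r : Finset ι) ≃ U :=
    (Equiv.optionCongr e0.symm).trans (Equiv.optionSubtypeNe r)
  have he0 : e none = r := Equiv.optionSubtypeNe_none r
  have he1 : ∀ b, ((e (some b) : U) : ι) = b.1 := by
    intro b; simp [e, e0]
  have key := gper_equiv e (Equiv.refl κ)
    (fun (i : U) j => if i = r then v j * A r j else A i j)
  have h2 : (fun (i : Option (U.erase r : Finset ι)) (j : κ) =>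
      (fun (i : U) j => if i = r then v j * A r j else A i j) (e i) (Equiv.refl κ j)) =
      (fun o : Option (U.erase r : Finset ι) => o.elim (fun j => v j * A r j) (fun i => A i)) := by
    funext o j
    cases o with
    | none => simp [he0]
    | some b =>
      have : e (some b) ≠ r := by
        intro h
        have h3 := he1 b
        rw [h] at h3
        exact Finset.ne_of_mem_erase b.2 h3.symm
      simp [this, he1]
  rw [h2] at key
  rw [key]
  unfold gper
  refine Finset.sum_congr rfl fun f _ => ?_
  rw [← Finset.mul_prod_erase _ _ (Finset.mem_univ r),
    ← Finset.mul_prod_erase _ (fun i : U => if i = r then v (f i) * A r (f i) else A i (f i)) (Finset.mem_univ r)]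
  rw [if_pos rfl]
  have : ∏ x ∈ Finset.univ.erase r, (if x = r then v (f x) * A r (f x) else A x (f x)) =
    ∏ x ∈ Finset.univ.erase r, A x (f x) := by
    refine Finset.prod_congr rfl fun x hx => ?_
    rw [if_neg (Finset.ne_of_mem_erase hx)]
  rw [this]; ring

lemma WU_rec (A : ι → κ → ℝ) (U : Finset ι) (v : κ → ℝ) :
    WU A U v = (∑ j, v j) * PU A U - ∑ r ∈ U, WU A (U.erase r) (fun j => v j * A r j) := by
  rw [← Finset.sum_coe_sort U (fun r => WU A (U.erase r) (fun j => v j * A r j))]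
  simp_rw [← WU_rec_aux]
  rw [Finset.sum_comm]
  unfold WU PU
  rw [gper_option]
  unfold gper
  rw [Finset.mul_sum, ← Finset.sum_sub_distrib]
  refine Finset.sum_congr rfl fun f _ => ?_
  rw [mul_sub, Finset.mul_sum, mul_comm (∑ j, v j), Finset.mul_sum, Finset.mul_sum]

lemma corr_mul (A : ι → κ → ℝ) (hA : ∀ i j, A i j = 1 ∨ A i j = -1) (v : κ → ℝ) (r : ι)
    (T : Finset ι) : corr A (fun j => v j * A r j) T =
      corr A v (if r ∈ T then T.erase r else insert r T) := by
  unfold corr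
  refine Finset.sum_congr rfl fun j _ => ?_
  split_ifs with h
  · rw [← Finset.mul_prod_erase T _ h]
    have : A r j * A r j = 1 := by rcases hA r j with h | h <;> rw [h] <;> norm_num
    linear_combination (v j * ∏ i ∈ T.erase r, A i j) * this
  · rw [Finset.prod_insert h]; ring

lemma WU_main (A : ι → κ → ℝ) (hA : ∀ i j, A i j = 1 ∨ A i j = -1) (u : ℕ) :
    ∀ (U S : Finset ι) (v : κ → ℝ), U.card = u → (∀ T, T ≠ S → corr A v T = 0) →
      WU A U v = if S ⊆ U then (-1) ^ S.card * (S.card.factorial : ℝ) * corr A v S * PU A (U \ S)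
        else 0 := by
  induction u with
  | zero =>
    intro U S v hU hv
    rw [Finset.card_eq_zero] at hU
    subst hU
    rw [WU_rec]
    have h0 : ∑ j, v j = corr A v ∅ := by simp [corr]
    rw [h0]
    by_cases hS : S = ∅
    · subst hS; simp
    · have : ¬ S ⊆ ∅ := by simpa using hS
      rw [if_neg this, hv ∅ (Ne.symm hS)]; simp
  | succ u ih =>
    intro U S v hU hv
    rw [WU_rec]
    have h0 : ∑ j, v j = corr A v ∅ := by simp [corr]
    rw [h0]
    have hterm : ∀ r ∈ U, WU A (U.erase r) (fun j => v j * A r j) =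
        if r ∈ S ∧ S ⊆ U then (-1) ^ (S.card - 1) * ((S.card - 1).factorial : ℝ) * corr A v S
          * PU A (U \ S) else 0 := by
      intro r hr
      by_cases hrS : r ∈ S
      · rw [ih (U.erase r) (S.erase r) _ (by rw [Finset.card_erase_of_mem hr, hU]; rfl)]
        · rw [corr_mul A hA]
          have h1 : S.erase r ⊆ U.erase r ↔ S ⊆ U := by
            constructor
            · intro h x hx
              by_cases hxr : x = r
              · rw [hxr]; exact hr
              · exact Finset.mem_of_mem_erase (h (Finset.mem_erase.2 ⟨hxr, hx⟩))
            · exact fun h => Finset.erase_subset_erase r h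
          have h2 : U.erase r \ S.erase r = U \ S := by
            ext x; simp only [Finset.mem_sdiff, Finset.mem_erase]
            by_cases hxr : x = r
            · subst hxr; simp [hrS]
            · simp [hxr]
          simp only [h1, hrS, true_and, h2, Finset.notMem_erase, if_false,
            Finset.insert_erase hrS, Finset.card_erase_of_mem hrS]
        · intro T hT
          rw [corr_mul A hA]
          apply hv
          intro h
          apply hT
          rw [← h]
          split_ifs with h3
          · rw [if_pos h3] at h; rw [← h] at hrS; simp at hrS
          · rw [Finset.erase_insert h3]
      · rw [ih (U.erase r) (insert r S) _ (by rw [Finset.card_erase_of_mem hr, hU]; rfl)]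
        · have h1 : ¬ insert r S ⊆ U.erase r := by
            intro h
            have := h (Finset.mem_insert_self r S)
            simp at this
          simp [h1, hrS]
        · intro T hT
          rw [corr_mul A hA]
          apply hv
          intro h
          apply hT
          rw [← h]
          split_ifs with h3
          · rw [Finset.insert_erase h3]
          · rw [if_neg h3] at h; rw [← h] at hrS; simp at hrS
    rw [Finset.sum_congr rfl hterm]
    by_cases hSU : S ⊆ U
    · simp only [hSU, and_true, if_true]
      rw [← Finset.sum_filter, Finset.sum_const]
      have hf : U.filter (fun r => r ∈ S) = S := by
        ext x; simp only [Finset.mem_filter]; exact ⟨fun h => h.2, fun h => ⟨hSU h, h⟩⟩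
      rw [hf]
      by_cases hS : S = ∅
      · subst hS; simp
      · rw [hv ∅ (Ne.symm hS)]
        obtain ⟨c, hc⟩ : ∃ c, S.card = c + 1 :=
          Nat.exists_eq_succ_of_ne_zero (by rwa [Ne, Finset.card_eq_zero])
        rw [hc, Nat.factorial_succ]
        simp only [Nat.add_sub_cancel, nsmul_eq_mul, pow_succ]
        push_cast
        ring
    · have hS : S ≠ ∅ := by rintro rfl; simp at hSU
      rw [hv ∅ (Ne.symm hS)]
      simp [hSU]

lemma WU_linear (A : ι → κ → ℝ) (U : Finset ι) :
    ∃ p : κ → ℝ, ∀ v, WU A U v = ∑ j, v j * p j := by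
  refine ⟨fun j => ∑ f : U ↪ κ, (∏ i : U, A i (f i)) * (1 - ∑ i, if f i = j then 1 else 0), ?_⟩
  intro v
  unfold WU
  rw [gper_option]
  simp_rw [Finset.mul_sum (s := (Finset.univ : Finset (U ↪ κ)))]
  rw [Finset.sum_comm]
  refine Finset.sum_congr rfl fun f _ => ?_
  simp_rw [mul_left_comm (v _)]
  rw [← Finset.mul_sum]
  congr 1
  simp_rw [mul_sub, Finset.sum_sub_distrib, Finset.mul_sum]
  congr 1
  · simp
  · rw [Finset.sum_comm]; simp

lemma pm_prod_abs {α : Type} (s : Finset α) (f : α → ℝ) (h : ∀ i, f i = 1 ∨ f i = -1) :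
    |∏ i ∈ s, f i| = 1 := by
  rw [Finset.abs_prod]
  apply Finset.prod_eq_one
  intro i _
  rcases h i with h | h <;> simp [h]

lemma PU_abs_le (A : ι → κ → ℝ) (hA : ∀ i j, A i j = 1 ∨ A i j = -1) (U : Finset ι) :
    |PU A U| ≤ (Fintype.card κ : ℝ) ^ U.card := by
  unfold PU gper
  refine (Finset.abs_sum_le_sum_abs _ _).trans ?_
  rw [Finset.sum_congr rfl (fun f _ => pm_prod_abs _ _ (fun i => hA _ _))]
  simp only [Finset.sum_const, Finset.card_univ, nsmul_eq_mul, mul_one, Fintype.card_embedding_eq,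
    Fintype.card_coe]
  exact_mod_cast Nat.descFactorial_le_pow _ _

lemma PU_lower {γ : Type} [Fintype γ] [DecidableEq γ] (r : ℕ) (A : ι → γ ⊕ Fin r → ℝ)
    (hA : ∀ i j, A i j = 1 ∨ A i j = -1) (h1 : ∀ i j, A i (Sum.inr j) = 1) (U : Finset ι) :
    2 * ((r - U.card : ℕ) : ℝ) ^ U.card - (Fintype.card (γ ⊕ Fin r) : ℝ) ^ U.card ≤ PU A U := by
  classical
  let emb : (U ↪ Fin r) ↪ (U ↪ γ ⊕ Fin r) :=
    ⟨fun f => f.trans Function.Embedding.inr, fun f g h => by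
      refine DFunLike.ext _ _ fun i => ?_
      have := DFunLike.congr_fun h i
      simpa using this⟩
  let I : Finset (U ↪ γ ⊕ Fin r) := Finset.univ.map emb
  have hI : I.card = r.descFactorial U.card := by
    simp [I, Fintype.card_embedding_eq]
  have hterm : ∀ σ : U ↪ γ ⊕ Fin r, (if σ ∈ I then (2:ℝ) else 0) - 1 ≤ ∏ i : U, A i (σ i) := by
    intro σ
    split_ifs with h
    · obtain ⟨f, _, rfl⟩ := Finset.mem_map.1 h
      have hone : ∏ i : U, A i (emb f i) = 1 := Finset.prod_eq_one fun i _ => h1 i (f i)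
      rw [hone]; norm_num
    · have := pm_prod_abs (Finset.univ : Finset U) (fun i : U => A i (σ i)) (fun i => hA _ _)
      have := neg_abs_le (∏ i : U, A i (σ i))
      linarith
  have hsum := Finset.sum_le_sum (fun σ (_ : σ ∈ Finset.univ) => hterm σ)
  rw [Finset.sum_sub_distrib, Finset.sum_ite_mem, Finset.univ_inter] at hsum
  simp only [Finset.sum_const, hI, Finset.card_univ, nsmul_eq_mul, mul_one,
    Fintype.card_embedding_eq, Fintype.card_coe] at hsum
  have e1 : (((Fintype.card (γ ⊕ Fin r)).descFactorial U.card : ℕ) : ℝ) ≤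
      (Fintype.card (γ ⊕ Fin r) : ℝ) ^ U.card := by
    exact_mod_cast Nat.descFactorial_le_pow _ _
  have e2 : ((r - U.card : ℕ) : ℝ) ^ U.card ≤ ((r.descFactorial U.card : ℕ) : ℝ) := by
    have := Nat.pow_sub_le_descFactorial r U.card
    have h3 : (r - U.card) ^ U.card ≤ (r + 1 - U.card) ^ U.card :=
      Nat.pow_le_pow_left (by omega) _
    exact_mod_cast h3.trans this
  unfold PU gper
  linarith

end

open Finset

lemma digits_inj (m M : ℕ) (E : Fin m → ℝ)
    (hE : ∀ t, (M : ℝ) * ∑ i ∈ univ.filter (· < t), |E i| < |E t|)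
    (a b : Fin m → Fin (M + 1)) (h : ∑ i, ((a i : ℕ) : ℝ) * E i = ∑ i, ((b i : ℕ) : ℝ) * E i) :
    a = b := by
  by_contra hne
  have hex : (univ.filter (fun i => a i ≠ b i)).Nonempty := by
    by_contra hem
    rw [Finset.not_nonempty_iff_eq_empty] at hem
    apply hne
    funext i
    by_contra hi
    have : i ∈ univ.filter (fun i => a i ≠ b i) := by simp [hi]
    rw [hem] at this; simp at this
  set t := (univ.filter (fun i => a i ≠ b i)).max' hex with ht
  have htm : a t ≠ b t := by
    have := Finset.max'_mem _ hex
    rw [← ht] at this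
    exact (Finset.mem_filter.1 this).2
  have htop : ∀ i, t < i → a i = b i := by
    intro i hi
    by_contra hc
    have := Finset.le_max' (univ.filter (fun i => a i ≠ b i)) i (by simp [hc])
    rw [← ht] at this
    exact absurd hi (not_lt.2 this)
  have h0 : ∑ i, (((a i : ℕ) : ℝ) - ((b i : ℕ) : ℝ)) * E i = 0 := by
    simp_rw [sub_mul, Finset.sum_sub_distrib]; linarith
  rw [← Finset.add_sum_erase _ _ (Finset.mem_univ t)] at h0
  have h1 : ∑ i ∈ univ.erase t, (((a i : ℕ) : ℝ) - ((b i : ℕ) : ℝ)) * E i =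
      ∑ i ∈ univ.filter (· < t), (((a i : ℕ) : ℝ) - ((b i : ℕ) : ℝ)) * E i := by
    symm
    apply Finset.sum_subset
    · intro i hi
      simp at hi ⊢
      exact ne_of_lt hi
    · intro i hi hi2
      simp at hi hi2
      rw [htop i (lt_of_le_of_ne hi2 (Ne.symm hi))]; simp
  rw [h1] at h0
  have hd : ∀ i, |((a i : ℕ) : ℝ) - ((b i : ℕ) : ℝ)| ≤ M := by
    intro i
    have h1 : ((a i : ℕ) : ℝ) ≤ M := by exact_mod_cast Nat.lt_succ_iff.1 (a i).2
    have h2 : ((b i : ℕ) : ℝ) ≤ M := by exact_mod_cast Nat.lt_succ_iff.1 (b i).2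
    have h3 : (0 : ℝ) ≤ ((a i : ℕ) : ℝ) := by positivity
    have h4 : (0 : ℝ) ≤ ((b i : ℕ) : ℝ) := by positivity
    rw [abs_le]; constructor <;> linarith
  have hlow : (1 : ℝ) ≤ |((a t : ℕ) : ℝ) - ((b t : ℕ) : ℝ)| := by
    have : ((a t : ℕ) : ℤ) - ((b t : ℕ) : ℤ) ≠ 0 := by
      intro hc
      apply htm
      apply Fin.ext
      omega
    have := Int.one_le_abs this
    exact_mod_cast this
  have h2 : |(((a t : ℕ) : ℝ) - ((b t : ℕ) : ℝ)) * E t| ≤ M * ∑ i ∈ univ.filter (· < t), |E i| := by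
    rw [eq_neg_of_add_eq_zero_left h0, abs_neg, Finset.mul_sum]
    refine (Finset.abs_sum_le_sum_abs _ _).trans (Finset.sum_le_sum fun i _ => ?_)
    rw [abs_mul]
    exact mul_le_mul_of_nonneg_right (hd i) (abs_nonneg _)
  rw [abs_mul] at h2
  have := hE t
  nlinarith [abs_nonneg (E t)]

lemma cube_orth (k : ℕ) (S T : Finset (Fin k)) :
    ∑ c : Fin k → Bool, (∏ i ∈ S, (if c i then (1:ℝ) else -1)) * ∏ i ∈ T, (if c i then (1:ℝ) else -1)
      = if T = S then 2 ^ k else 0 := by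
  have h1 : ∀ (R : Finset (Fin k)) (c : Fin k → Bool), ∏ i ∈ R, (if c i then (1:ℝ) else -1) =
      ∏ i, (if i ∈ R then (if c i then (1:ℝ) else -1) else 1) := by
    intro R c
    rw [Finset.prod_ite_mem]; simp
  simp_rw [h1, ← Finset.prod_mul_distrib]
  have h2 := Finset.prod_univ_sum (fun _ : Fin k => (univ : Finset Bool)) (fun i b =>
    (if i ∈ S then (if b then (1:ℝ) else -1) else 1) * (if i ∈ T then (if b then (1:ℝ) else -1) else 1))
  rw [Fintype.piFinset_univ] at h2
  rw [← h2]
  split_ifs with h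
  · subst h
    have : ∀ i ∈ (univ : Finset (Fin k)), ∑ b : Bool, (if i ∈ T then (if b then (1:ℝ) else -1) else 1) * (if i ∈ T then (if b then (1:ℝ) else -1) else 1) = 2 := by
      intro i _
      by_cases hi : i ∈ T <;> (simp [hi]; try norm_num)
    rw [Finset.prod_congr rfl this]; simp
  · have : ∃ i, ¬ (i ∈ T ↔ i ∈ S) := by
      by_contra hc
      push Not at hc
      exact h (Finset.ext hc)
    obtain ⟨i, hi⟩ := this
    apply Finset.prod_eq_zero (Finset.mem_univ i)
    by_cases h3 : i ∈ S <;> by_cases h4 : i ∈ T <;> simp_all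

lemma N0_facts (k n M : ℕ) (hk : 3 ≤ k) (hn : 4 * (16 * k ^ 5) ^ k ≤ n)
    (hM : M = n / (4 * (16 * k ^ 5) ^ k)) :
    4 * k * ((k - 2) * (M * 2 ^ k) + k) ≤ n ∧ 2 * M * k ^ (k + 1) < n := by
  have hM' : M * (4 * (16 * k ^ 5) ^ k) ≤ n := by rw [hM]; exact Nat.div_mul_le_self _ _
  have e1 : (16 * k ^ 5) ^ k = 8 ^ k * 2 ^ k * k ^ k * (k ^ 4) ^ k := by
    rw [← mul_pow, ← mul_pow, ← mul_pow]; congr 1; ring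
  have hk4 : k ^ 4 ≤ (k ^ 4) ^ k := Nat.le_self_pow (by omega) _
  have hk2 : k ^ 2 * 9 ≤ k ^ 4 := by nlinarith [sq_nonneg k, Nat.mul_le_mul hk hk]
  have h8 : 8 ≤ 8 ^ k := Nat.le_self_pow (by omega) _
  have p2 : 1 ≤ 2 ^ k := Nat.one_le_two_pow
  have pk : 1 ≤ k ^ k := Nat.one_le_pow _ _ (by omega)
  have hbig : 8 * (2 ^ k * k ^ k * k ^ 4) ≤ (16 * k ^ 5) ^ k := by
    rw [e1]
    calc 8 * (2 ^ k * k ^ k * k ^ 4) ≤ 8 ^ k * (2 ^ k * k ^ k * (k ^ 4) ^ k) := by gcongr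
      _ = _ := by ring
  have hb1 : 8 * k ^ 4 ≤ 8 * (2 ^ k * k ^ k * k ^ 4) := by
    nlinarith [Nat.mul_le_mul (Nat.mul_le_mul p2 pk) (le_refl (k ^ 4))]
  have hb2 : 8 * (2 ^ k * k ^ 4) ≤ 8 * (2 ^ k * k ^ k * k ^ 4) := by
    have : 2 ^ k * 1 * k ^ 4 ≤ 2 ^ k * k ^ k * k ^ 4 := by gcongr
    linarith
  have hkk4 : k ≤ k ^ 4 := Nat.le_self_pow (by omega) _
  have hb3 : 8 * (k ^ k * k) ≤ 8 * (2 ^ k * k ^ k * k ^ 4) := by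
    have : 1 * k ^ k * k ≤ 2 ^ k * k ^ k * k ^ 4 := by gcongr
    linarith
  constructor
  · have a1 : 4 * k * ((k - 2) * (M * 2 ^ k) + k) ≤ 4 * k * (k * (M * 2 ^ k) + k) := by
      gcongr; omega
    have a2 : M * (32 * (2 ^ k * k ^ 4)) ≤ n := by
      refine le_trans ?_ hM'
      apply Nat.mul_le_mul_left; linarith
    have a3 : 32 * k ^ 4 ≤ n := by linarith
    have a4 : M * 2 ^ k * (k ^ 2 * 9) ≤ M * 2 ^ k * k ^ 4 := by gcongr
    nlinarith
  · have a2 : M * (32 * (k ^ k * k)) ≤ n := by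
      refine le_trans ?_ hM'
      apply Nat.mul_le_mul_left; linarith
    have a3 : 0 < n := by nlinarith [Nat.mul_le_mul hk hk]
    rw [pow_succ]
    nlinarith
 
lemma first_bound (k : ℕ) (hk : 3 ≤ k) :
    (k : ℝ) ^ (-((10:ℝ) * (k : ℝ) ^ 2)) ≤ ((4 * (16 * (k : ℝ) ^ 5) ^ k)⁻¹) ^ (k - 2) := by
  have hk0 : (0:ℝ) < k := by positivity
  have hk3 : (3:ℝ) ≤ k := by exact_mod_cast hk
  rw [Real.rpow_neg hk0.le, inv_pow]
  apply inv_anti₀ (by positivity)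
  have : (10:ℝ) * (k:ℝ) ^ 2 = ((10 * k ^ 2 : ℕ) : ℝ) := by push_cast; ring
  rw [this, Real.rpow_natCast]
  have h4 : (4:ℝ) ≤ (k:ℝ) ^ 2 := by nlinarith
  have h16 : (16:ℝ) ≤ (k:ℝ) ^ 3 := by
    calc (16:ℝ) ≤ 3 ^ 3 := by norm_num
      _ ≤ _ := by gcongr
  calc (4 * (16 * (k : ℝ) ^ 5) ^ k) ^ (k - 2) ≤ ((k:ℝ)^2 * ((k:ℝ)^3 * (k : ℝ) ^ 5) ^ k) ^ (k - 2) := by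
        gcongr
    _ = (k:ℝ) ^ ((2 + 8 * k) * (k - 2)) := by
        rw [← pow_add, ← pow_mul, ← pow_add, ← pow_mul]
    _ ≤ _ := by
        apply pow_le_pow_right₀ (by linarith)
        have : (2 + 8 * k) * (k - 2) ≤ (10 * k) * k := by
          apply Nat.mul_le_mul <;> omega
        nlinarith

lemma pow_lower (n g k u r : ℕ) (hk : 1 ≤ k) (hr : r + g = n) (h : 4 * k * (g + k) ≤ n) (hu : u ≤ k) :
    (3 / 4 : ℝ) * (n : ℝ) ^ u ≤ ((r - u : ℕ) : ℝ) ^ u := by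
  have hn : 0 < n := by nlinarith
  have hn' : (0:ℝ) < n := by exact_mod_cast hn
  have hgk : g + k ≤ n := by nlinarith
  have h1 : (n : ℝ) * (1 + -(((g:ℝ) + k) / n)) ≤ ((r - u : ℕ) : ℝ) := by
    have : n - (g + k) ≤ r - u := by omega
    have h2 : ((n - (g + k) : ℕ) : ℝ) ≤ ((r - u : ℕ) : ℝ) := by exact_mod_cast this
    rw [Nat.cast_sub hgk] at h2
    push_cast at h2
    have e : (n : ℝ) * (1 + -(((g:ℝ) + k) / n)) = n - (g + k) := by field_simp; ring
    linarith
  have hx : ((g:ℝ) + k) / n ≤ 1 / (4 * k) := by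
    rw [div_le_div_iff₀ hn' (by positivity)]
    have : (4 * k * (g + k) : ℝ) ≤ n := by exact_mod_cast h
    linarith
  have hk' : (1:ℝ) ≤ k := by exact_mod_cast hk
  have hx1 : 1 / (4 * (k:ℝ)) ≤ 1 / 4 := by
    apply one_div_le_one_div_of_le <;> linarith
  have hb := one_add_mul_le_pow (a := -(((g:ℝ) + k) / n)) (by linarith) u
  have hux : (u:ℝ) * (((g:ℝ) + k) / n) ≤ 1 / 4 := by
    calc (u:ℝ) * (((g:ℝ) + k) / n) ≤ k * (1 / (4 * k)) := by
          gcongr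
      _ = 1 / 4 := by field_simp
  calc (3 / 4 : ℝ) * (n : ℝ) ^ u ≤ (1 + -(((g:ℝ) + k) / n)) ^ u * (n:ℝ) ^ u := by
        gcongr; linarith
    _ = ((n : ℝ) * (1 + -(((g:ℝ) + k) / n))) ^ u := by rw [mul_pow]; ring
    _ ≤ _ := by
        apply pow_le_pow_left₀ _ h1
        apply mul_nonneg hn'.le; linarith

lemma values_finite (k n : ℕ) : {x : ℝ | ∃ A : Matrix (Fin k) (Fin n) ℝ,
      (∀ i j, A i j = 1 ∨ A i j = -1) ∧ rperm A = x}.Finite := by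
  have h : (Set.range (fun B : Fin k → Fin n → Bool =>
      rperm (fun i j => if B i j then (1:ℝ) else -1))).Finite := Set.finite_range _
  refine h.subset ?_
  rintro x ⟨A, hA, rfl⟩
  refine ⟨fun i j => decide (A i j = 1), ?_⟩
  dsimp only
  congr 1
  funext i j
  rcases hA i j with h | h
  · simp [h]
  · have : A i j ≠ 1 := by rw [h]; norm_num
    simp [h]; norm_num

/-- the fixed `k` rows -/
noncomputable def rowsA (k m M r : ℕ) (i : Fin k) :
    (Fin m × Fin M × (Fin k → Bool)) ⊕ Fin r → ℝ :=
  Sum.elim (fun x => if x.2.2 i then (1:ℝ) else -1) (fun _ => 1)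

lemma rowsA_pm (k m M r : ℕ) (i : Fin k) (j) : rowsA k m M r i j = 1 ∨ rowsA k m M r i j = -1 := by
  rcases j with x | x
  · simp only [rowsA, Sum.elim_inl]; split_ifs <;> simp
  · simp [rowsA]

def Uset (k i : ℕ) : Finset (Fin k) := univ.filter (fun j => (j : ℕ) < i)

lemma Uset_card (k i : ℕ) (h : i ≤ k) : (Uset k i).card = i := by
  unfold Uset
  rw [Fin.card_filter_val_lt]; omega

/-- the digit vectors -/
noncomputable def digV (k m M r : ℕ) (a : Fin m → Fin (M + 1)) :
    (Fin m × Fin M × (Fin k → Bool)) ⊕ Fin r → ℝ :=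
  Sum.elim (fun x => (if (x.2.1 : ℕ) < a x.1 then (1:ℝ) else -1) *
    ∏ i ∈ (Uset k x.1)ᶜ, (if x.2.2 i then (1:ℝ) else -1)) (fun _ => 1)

lemma digV_pm (k m M r : ℕ) (a) (j) : digV k m M r a j = 1 ∨ digV k m M r a j = -1 := by
  rcases j with x | x
  · simp only [digV, Sum.elim_inl]
    have := pm_prod_abs (Uset k x.1)ᶜ (fun i => if x.2.2 i then (1:ℝ) else -1)
      (fun i => by split_ifs <;> simp)
    rcases (abs_eq (by norm_num)).1 this with h | h <;> rw [h] <;> split_ifs <;> simp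
  · simp [digV]

/-- one group -/
noncomputable def grpV (k m M r : ℕ) (i : Fin m) (l : Fin M) :
    (Fin m × Fin M × (Fin k → Bool)) ⊕ Fin r → ℝ :=
  Sum.elim (fun x => if x.1 = i ∧ x.2.1 = l then
    ∏ i ∈ (Uset k x.1)ᶜ, (if x.2.2 i then (1:ℝ) else -1) else 0) (fun _ => 0)

lemma grp_sum (k m M r : ℕ) (i : Fin m) (l : Fin M)
    (F : (Fin m × Fin M × (Fin k → Bool)) ⊕ Fin r → ℝ) :
    ∑ j, grpV k m M r i l j * F j = ∑ c : Fin k → Bool,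
      (∏ t ∈ (Uset k i)ᶜ, (if c t then (1:ℝ) else -1)) * F (Sum.inl (i, l, c)) := by
  rw [Fintype.sum_sum_type]
  simp only [grpV, Sum.elim_inl, Sum.elim_inr, zero_mul, Finset.sum_const_zero, add_zero,
    Fintype.sum_prod_type]
  rw [Finset.sum_eq_single i, Finset.sum_eq_single l]
  · simp
  · intro b _ hb; simp [hb]
  · simp
  · intro b _ hb; simp [hb]
  · simp

lemma grp_corr (k m M r : ℕ) (i : Fin m) (l : Fin M) (T : Finset (Fin k)) :
    corr (rowsA k m M r) (grpV k m M r i l) T = if T = (Uset k i)ᶜ then 2 ^ k else 0 := by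
  unfold corr
  rw [grp_sum, ← cube_orth]
  simp [rowsA]

/-- digit weights -/
noncomputable def wt (k m M r : ℕ) (i : Fin m) : ℝ :=
  (-1) ^ ((Uset k i)ᶜ).card * ((((Uset k i)ᶜ).card.factorial : ℕ) : ℝ) * 2 ^ k *
    PU (rowsA k m M r) (Uset k i)

lemma grp_W (k m M r : ℕ) (i : Fin m) (l : Fin M) :
    WU (rowsA k m M r) univ (grpV k m M r i l) = wt k m M r i := by
  rw [WU_main (rowsA k m M r) (rowsA_pm k m M r) _ univ (Uset k i)ᶜ _ rfl]
  · rw [if_pos (Finset.subset_univ _), grp_corr, if_pos rfl]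
    unfold wt
    congr 2
    ext x; simp
  · intro T hT
    rw [grp_corr, if_neg hT]

lemma dig_W (k m M r : ℕ) : ∃ C : ℝ, ∀ a,
    WU (rowsA k m M r) univ (digV k m M r a) =
      C + 2 * ∑ i, ((a i : ℕ) : ℝ) * wt k m M r i := by
  obtain ⟨p, hp⟩ := WU_linear (rowsA k m M r) univ
  refine ⟨∑ j, p (Sum.inr j) - ∑ i, M * wt k m M r i, fun a => ?_⟩
  rw [hp, Fintype.sum_sum_type]
  simp only [digV, Sum.elim_inl, Sum.elim_inr, one_mul, Fintype.sum_prod_type]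
  have h1 : ∀ (i : Fin m) (l : Fin M), ∑ c : Fin k → Bool,
      (if (l : ℕ) < a i then (1:ℝ) else -1) *
        (∏ t ∈ (Uset k i)ᶜ, (if c t then (1:ℝ) else -1)) * p (Sum.inl (i, l, c)) =
      (if (l : ℕ) < a i then (1:ℝ) else -1) * wt k m M r i := by
    intro i l
    rw [← grp_W k m M r i l, hp, grp_sum, Finset.mul_sum]
    exact Finset.sum_congr rfl fun c _ => by ring
  simp_rw [h1, ← Finset.sum_mul]
  have h2 : ∀ i : Fin m, ∑ l : Fin M, (if (l : ℕ) < a i then (1:ℝ) else -1) =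
      2 * ((a i : ℕ) : ℝ) - M := by
    intro i
    have e : ∀ l : Fin M, (if (l : ℕ) < a i then (1:ℝ) else -1) =
      2 * (if (l : ℕ) < a i then (1:ℝ) else 0) - 1 := by
      intro l; split_ifs <;> norm_num
    simp_rw [e]
    rw [Finset.sum_sub_distrib, ← Finset.mul_sum, Finset.sum_boole, Fin.card_filter_val_lt]
    have : min M (a i : ℕ) = a i := min_eq_right (Nat.lt_succ_iff.1 (a i).2)
    simp [this]
  simp_rw [h2, sub_mul, Finset.sum_sub_distrib, Finset.mul_sum, mul_assoc]
  ring

lemma wt_bounds (k m M r n : ℕ) (hk : 1 ≤ k) (hm : m ≤ k) (hr : r + m * (M * 2 ^ k) = n)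
    (h : 4 * k * (m * (M * 2 ^ k) + k) ≤ n) (i : Fin m) :
    |wt k m M r i| ≤ 2 ^ k * (k : ℝ) ^ k * (n : ℝ) ^ (i : ℕ) ∧
    2 ^ k * (n : ℝ) ^ (i : ℕ) / 2 ≤ |wt k m M r i| := by
  have hcard : Fintype.card ((Fin m × Fin M × (Fin k → Bool)) ⊕ Fin r) = n := by
    simp; omega
  have hU : (Uset k i).card = i := Uset_card k i (by omega)
  have h1 := PU_abs_le (rowsA k m M r) (rowsA_pm k m M r) (Uset k i)
  have h2 := PU_lower r (rowsA k m M r) (rowsA_pm k m M r) (fun i j => by simp [rowsA]) (Uset k i)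
  rw [hcard, hU] at h1 h2
  have h3 := pow_lower n _ k i r hk hr h (by omega)
  have h4 : (n:ℝ) ^ (i:ℕ) / 2 ≤ |PU (rowsA k m M r) (Uset k i)| :=
    le_trans (by linarith) (le_abs_self _)
  have e : |wt k m M r i| = ((((Uset k i)ᶜ).card.factorial : ℕ) : ℝ) * 2 ^ k *
    |PU (rowsA k m M r) (Uset k i)| := by
    unfold wt
    rw [abs_mul, abs_mul, abs_mul, abs_pow]
    simp
  have f1 : (1:ℝ) ≤ ((((Uset k i)ᶜ).card.factorial : ℕ) : ℝ) := by
    exact_mod_cast Nat.factorial_pos _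
  have f2 : ((((Uset k i)ᶜ).card.factorial : ℕ) : ℝ) ≤ (k:ℝ) ^ k := by
    have c : ((Uset k i)ᶜ).card ≤ k := by
      simpa using Finset.card_le_univ ((Uset k i)ᶜ)
    exact_mod_cast (Nat.factorial_le c).trans (Nat.factorial_le_pow k)
  rw [e]
  constructor
  · calc _ ≤ (k:ℝ) ^ k * 2 ^ k * (n:ℝ) ^ (i:ℕ) := by gcongr
      _ = _ := by ring
  · calc _ = 1 * 2 ^ k * ((n:ℝ) ^ (i:ℕ) / 2) := by ring
      _ ≤ _ := by gcongr

lemma wt_sep (k m M r n : ℕ) (hk : 1 ≤ k) (hm : m ≤ k) (hr : r + m * (M * 2 ^ k) = n)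
    (h : 4 * k * (m * (M * 2 ^ k) + k) ≤ n) (h2 : 2 * M * k ^ (k + 1) < n) (t : Fin m) :
    (M : ℝ) * ∑ i ∈ univ.filter (· < t), |wt k m M r i| < |wt k m M r t| := by
  have hb := fun i => wt_bounds k m M r n hk hm hr h i
  have hn : (1:ℝ) ≤ n := by
    have : 1 ≤ n := by omega
    exact_mod_cast this
  have hn0 : (0:ℝ) < n := by linarith
  refine lt_of_lt_of_le ?_ (hb t).2
  by_cases ht : (t : ℕ) = 0
  · have : univ.filter (· < t) = ∅ := by
      ext x; simp; exact Fin.le_def.2 (by omega)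
    rw [this]; simp; positivity
  · obtain ⟨s, hs⟩ := Nat.exists_eq_succ_of_ne_zero ht
    have hle : ∑ i ∈ univ.filter (· < t), |wt k m M r i| ≤
        k * (2 ^ k * (k : ℝ) ^ k * (n : ℝ) ^ s) := by
      have : ∀ i ∈ univ.filter (· < t), |wt k m M r i| ≤ 2 ^ k * (k : ℝ) ^ k * (n : ℝ) ^ s := by
        intro i hi
        refine (hb i).1.trans ?_
        have : (i:ℕ) ≤ s := by
          have := (Finset.mem_filter.1 hi).2
          rw [Fin.lt_def] at this; omega
        gcongr
      refine (Finset.sum_le_card_nsmul _ _ _ this).trans ?_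
      rw [nsmul_eq_mul]
      have c : (univ.filter (· < t)).card ≤ k := by
        refine (Finset.card_le_univ _).trans ?_
        simpa using hm
      have c' : ((univ.filter (· < t)).card : ℝ) ≤ k := by exact_mod_cast c
      gcongr
    rw [hs, Nat.succ_eq_add_one, pow_succ]
    have h2' : (2:ℝ) * M * (k:ℝ) ^ (k + 1) < n := by exact_mod_cast h2
    rw [pow_succ] at h2'
    have hp : (0:ℝ) < 2 ^ k * (n:ℝ) ^ s := by positivity
    have := mul_lt_mul_of_pos_left h2' hp
    have hM : (0:ℝ) ≤ M := by positivity
    have := mul_le_mul_of_nonneg_left hle hM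
    nlinarith

lemma count_lower (k m M r n : ℕ) (hk : 1 ≤ k) (hm : m ≤ k) (hr : r + m * (M * 2 ^ k) = n)
    (h : 4 * k * (m * (M * 2 ^ k) + k) ≤ n) (h2 : 2 * M * k ^ (k + 1) < n) :
    (M + 1) ^ m ≤ permCount (k + 1) n := by
  classical
  have hcard : Fintype.card (Fin n) =
      Fintype.card ((Fin m × Fin M × (Fin k → Bool)) ⊕ Fin r) := by
    simp; omega
  let f : Fin n ≃ (Fin m × Fin M × (Fin k → Bool)) ⊕ Fin r := Fintype.equivOfCardEq hcard
  let e : Fin (k + 1) ≃ Option (univ : Finset (Fin k)) := Fintype.equivOfCardEq (by simp)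
  obtain ⟨C, hC⟩ := dig_W k m M r
  let V : (Fin m → Fin (M + 1)) → ℝ := fun a => WU (rowsA k m M r) univ (digV k m M r a)
  have hV : Function.Injective V := by
    intro a b hab
    simp only [V] at hab
    rw [hC, hC] at hab
    exact digits_inj m M (wt k m M r) (wt_sep k m M r n hk hm hr h h2) a b (by linarith)
  have hsub : Set.range V ⊆ {x : ℝ | ∃ A : Matrix (Fin (k + 1)) (Fin n) ℝ,
      (∀ i j, A i j = 1 ∨ A i j = -1) ∧ rperm A = x} := by
    rintro x ⟨a, rfl⟩
    refine ⟨fun i j => (e i).elim (digV k m M r a) (fun i => rowsA k m M r i) (f j), ?_, ?_⟩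
    · intro i j
      dsimp only
      cases e i with
      | none => exact digV_pm k m M r a (f j)
      | some b => exact rowsA_pm k m M r b (f j)
    · exact gper_equiv e f (fun o : Option (univ : Finset (Fin k)) =>
        o.elim (digV k m M r a) (fun i => rowsA k m M r i))
  have := Set.ncard_le_ncard hsub (values_finite _ _)
  unfold permCount
  refine le_trans (le_of_eq ?_) this
  rw [← Set.image_univ, Set.ncard_image_of_injective _ hV, Set.ncard_univ, Nat.card_eq_fintype_card]
  simp

lemma second_bound (k n : ℕ) (hk : 3 ≤ k) :
    ((4 * (16 * (k : ℝ) ^ 5) ^ k)⁻¹) ^ (k - 2) * (n : ℝ) ^ (k - 2) ≤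
        (permCount (k + 1) n : ℝ) := by
  have hN : (0:ℝ) < 4 * (16 * (k : ℝ) ^ 5) ^ k := by
    have : (0:ℝ) < k := by positivity
    positivity
  rw [← mul_pow]
  by_cases hn : 4 * (16 * k ^ 5) ^ k ≤ n
  · obtain ⟨h1, h2⟩ := N0_facts k n _ hk hn rfl
    set M := n / (4 * (16 * k ^ 5) ^ k) with hM
    have hg : (k - 2) * (M * 2 ^ k) ≤ n := by
      refine le_trans ?_ h1
      calc (k - 2) * (M * 2 ^ k) ≤ (k - 2) * (M * 2 ^ k) + k := Nat.le_add_right _ _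
        _ ≤ _ := Nat.le_mul_of_pos_left _ (by omega)
    have := count_lower k (k - 2) M (n - (k - 2) * (M * 2 ^ k)) n (by omega) (by omega)
      (by omega) h1 h2
    have h3 : ((M + 1 : ℕ) : ℝ) ^ (k - 2) ≤ (permCount (k + 1) n : ℝ) := by exact_mod_cast this
    refine le_trans ?_ h3
    gcongr
    rw [inv_mul_le_iff₀ hN]
    have h4 : n < (4 * (16 * k ^ 5) ^ k) * (M + 1) := by
      rw [hM]
      apply Nat.lt_mul_div_succ
      have : 0 < k := by omega
      positivity
    exact_mod_cast h4.le
  · have h1 : (1:ℝ) ≤ (permCount (k + 1) n : ℝ) := by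
      have : 0 < permCount (k + 1) n := by
        unfold permCount
        rw [Set.ncard_pos (values_finite _ _)]
        exact ⟨_, fun _ _ => 1, fun _ _ => Or.inl rfl, rfl⟩
      exact_mod_cast this
    refine le_trans ?_ h1
    apply pow_le_one₀ (by positivity)
    rw [inv_mul_le_iff₀ hN, mul_one]
    have := (not_le.1 hn).le
    exact_mod_cast this

/-- There is an absolute constant `C > 0` such that for all `k ≥ 3` and `n ≥ k + 1`,
`r_{k+1,n} ≥ k^(−C k²) · n^(k−2)`; in particular one may take the explicit bound
`r_{k+1,n} ≥ (4·(16k⁵)^k)^{−(k−2)} · n^(k−2)`. -/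
theorem stmt17 :
    ∃ C : ℝ, 0 < C ∧ ∀ k : ℕ, 3 ≤ k → ∀ n : ℕ, k + 1 ≤ n →
      (k : ℝ) ^ (-(C * (k : ℝ) ^ 2)) * (n : ℝ) ^ (k - 2) ≤ (permCount (k + 1) n : ℝ) ∧
      ((4 * (16 * (k : ℝ) ^ 5) ^ k)⁻¹) ^ (k - 2) * (n : ℝ) ^ (k - 2) ≤
        (permCount (k + 1) n : ℝ) := by
  refine ⟨10, by norm_num, fun k hk n _ => ⟨?_, second_bound k n hk⟩⟩
  refine le_trans ?_ (second_bound k n hk)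
  exact mul_le_mul_of_nonneg_right (first_bound k hk) (by positivity)
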